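/- Let a, b, c be real numbers with a − 2b − 4c ≠ 0. For every real x > 0, the normalized function h_{1/2}(x) = 2^{1/2} Γ(3/2) x^{3/4} N_{1/2}(√x) / Q(1/2) satisfies h_{1/2}(x) = [4(a−b) x cos(√x) + (4a x − 3a + 2b − 4c) √x sin(√x)] / (a − 2b − 4c). -/

import Mathlib

open Real

/-- The Bessel function of the first kind of order `ν`, defined by its power series
(as a function of a real variable). -/
noncomputable def besselJ (ν : ℝ) (x : ℝ) : ℝ :=
  ∑' n : ℕ, ((-1 : ℝ) ^ n / (n.factorial * Real.Gamma (n + ν + 1))) * (x / 2) ^ (2 * (n : ℝ) + ν)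

/-- `N_ν(x) = a x² J_ν''(x) + b x J_ν'(x) + c J_ν(x)`. -/
noncomputable def besselN (a b c ν : ℝ) (x : ℝ) : ℝ :=
  a * x ^ 2 * deriv (deriv (besselJ ν)) x + b * x * deriv (besselJ ν) x + c * besselJ ν x

/-- `Q(t) = a t (t − 1) + b t + c`. -/
def Qpoly (a b c : ℝ) (t : ℝ) : ℝ := a * t * (t - 1) + b * t + c

/-!
Legendre's duplication formula turns the power series of `J_{1/2}` into that of the sine, so
`J_{1/2}(x) = √(2/π) x^{-1/2} sin x`. The Cauchy–Euler operator `L = a x² D² + b x D + c` satisfies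
`L(x^p) = Q(p) x^p`, hence conjugating it by `x^p` gives
`L(x^p g) = x^p (a x² g'' + (2ap + b) x g' + Q(p) g)`. Taking `p = -1/2` and `g = sin` yields
`N_{1/2}` in closed form, and the stated formula is the rescaled value at `√x`.
-/

open Filter Topology

/-- The Cauchy–Euler operator `f ↦ a x² f'' + b x f' + c f`, of which `besselN a b c ν` is the value
at `besselJ ν`. -/
noncomputable def cauchyEuler (a b c : ℝ) (f : ℝ → ℝ) (x : ℝ) : ℝ :=
  a * x ^ 2 * deriv (deriv f) x + b * x * deriv f x + c * f x

section CauchyEuler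

variable {a b c p x : ℝ} {f g g' : ℝ → ℝ}

lemma cauchyEuler_congr (h : f =ᶠ[𝓝 x] g) : cauchyEuler a b c f x = cauchyEuler a b c g x := by
  simp only [cauchyEuler, h.deriv.deriv_eq, h.deriv_eq, h.eq_of_nhds]

lemma cauchyEuler_const_mul (k : ℝ) :
    cauchyEuler a b c (fun t ↦ k * f t) x = k * cauchyEuler a b c f x := by
  simp only [cauchyEuler, deriv_const_mul_field']
  ring

lemma hasDerivAt_rpow_mul {d : ℝ} (hx : x ≠ 0) (hg : HasDerivAt g d x) :
    HasDerivAt (fun t ↦ t ^ p * g t) (x ^ p * (p / x * g x + d)) x := by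
  refine ((hasDerivAt_rpow_const (Or.inl hx)).mul hg).congr_deriv ?_
  rw [rpow_sub_one hx]
  ring

lemma cauchyEuler_rpow_mul {d : ℝ} (hx : x ≠ 0) (hg : ∀ᶠ t in 𝓝 x, HasDerivAt g (g' t) t)
    (hg' : HasDerivAt g' d x) :
    cauchyEuler a b c (fun t ↦ t ^ p * g t) x =
      x ^ p * (a * x ^ 2 * d + (2 * a * p + b) * x * g' x + Qpoly a b c p * g x) := by
  have deriv_eventuallyEq : deriv (fun t ↦ t ^ p * g t) =ᶠ[𝓝 x]
      fun t ↦ t ^ p * (p / t * g t + g' t) := by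
    filter_upwards [hg, eventually_ne_nhds hx] with t hgt ht
    exact (hasDerivAt_rpow_mul ht hgt).deriv
  have hasDerivAt_factor : HasDerivAt (fun t ↦ p / t * g t + g' t)
      (-p / x ^ 2 * g x + p / x * g' x + d) x := by
    refine ((((hasDerivAt_inv hx).const_mul p).mul hg.self_of_nhds).add hg').congr_deriv ?_
    ring
  rw [cauchyEuler, deriv_eventuallyEq.deriv_eq, deriv_eventuallyEq.eq_of_nhds,
    (hasDerivAt_rpow_mul hx hasDerivAt_factor).deriv, Qpoly]
  field_simp
  ring

end CauchyEuler

lemma factorial_mul_Gamma_add_one_half_add_one (n : ℕ) :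
    n.factorial * Gamma (n + 1 / 2 + 1) = (2 * n + 1).factorial * √π / 2 ^ (2 * n + 1) := by
  have duplication := Gamma_mul_Gamma_add_half (n + 1)
  have two_mul_eq : 2 * ((n : ℝ) + 1) = ((2 * n + 1 : ℕ) : ℝ) + 1 := by push_cast; ring
  have exponent_eq : 1 - (((2 * n + 1 : ℕ) : ℝ) + 1) = -((2 * n + 1 : ℕ) : ℝ) := by ring
  rw [two_mul_eq, exponent_eq, Gamma_nat_eq_factorial, Gamma_nat_eq_factorial,
    rpow_neg zero_le_two, rpow_natCast] at duplication
  rw [add_right_comm, duplication]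
  ring

lemma Gamma_three_halves : Gamma (3 / 2) = √π / 2 := by
  rw [show (3 / 2 : ℝ) = 1 / 2 + 1 by norm_num, Gamma_add_one (by norm_num), Gamma_one_half_eq]
  ring

lemma besselJ_one_half {x : ℝ} (hx : 0 < x) :
    besselJ (1 / 2) x = √(2 / π) * (x ^ (-1 / 2 : ℝ) * sin x) := by
  rw [← mul_assoc, besselJ, ← ((hasSum_sin x).mul_left _).tsum_eq]
  refine tsum_congr fun n ↦ ?_
  have rpow_div_two : (x / 2) ^ (2 * (n : ℝ) + 1 / 2) =
      x ^ (-1 / 2 : ℝ) * x ^ (2 * n + 1) / (2 ^ (2 * n) * √2) := by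
    rw [div_rpow hx.le zero_le_two, rpow_add two_pos, ← sqrt_eq_rpow, ← rpow_natCast x,
      ← rpow_add hx, ← rpow_natCast 2]
    push_cast
    ring_nf
  rw [factorial_mul_Gamma_add_one_half_add_one, rpow_div_two, sqrt_div zero_le_two]
  field_simp
  rw [sq_sqrt zero_le_two]
  ring

lemma besselN_one_half (a b c : ℝ) {x : ℝ} (hx : 0 < x) :
    besselN a b c (1 / 2) x =
      √(2 / π) * (x ^ (-1 / 2 : ℝ) *
        (-a * x ^ 2 * sin x + (b - a) * x * cos x + Qpoly a b c (-1 / 2) * sin x)) := by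
  have besselJ_eventuallyEq :
      besselJ (1 / 2) =ᶠ[𝓝 x] fun t ↦ √(2 / π) * (t ^ (-1 / 2 : ℝ) * sin t) := by
    filter_upwards [lt_mem_nhds hx] with t ht using besselJ_one_half ht
  calc besselN a b c (1 / 2) x
      = cauchyEuler a b c (besselJ (1 / 2)) x := rfl
    _ = √(2 / π) * cauchyEuler a b c (fun t ↦ t ^ (-1 / 2 : ℝ) * sin t) x := by
      rw [cauchyEuler_congr besselJ_eventuallyEq, cauchyEuler_const_mul]
    _ = _ := by
      rw [cauchyEuler_rpow_mul hx.ne' (.of_forall hasDerivAt_sin) (hasDerivAt_cos x)]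
      ring

lemma sqrt_two_mul_Gamma_three_halves_mul_sqrt : √2 * Gamma (3 / 2) * √(2 / π) = 1 := by
  rw [Gamma_three_halves, sqrt_div zero_le_two]
  field_simp
  exact sq_sqrt zero_le_two

lemma rpow_three_quarters_mul_sqrt_rpow {x : ℝ} (hx : 0 < x) :
    x ^ (3 / 4 : ℝ) * √x ^ (-1 / 2 : ℝ) = √x := by
  rw [sqrt_eq_rpow, ← rpow_mul hx.le, ← rpow_add hx]
  norm_num

lemma two_rpow_mul_Gamma_mul_besselN_one_half_sqrt (a b c : ℝ) {x : ℝ} (hx : 0 < x) :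
    (2 : ℝ) ^ (1 / 2 : ℝ) * Gamma (3 / 2) * x ^ (3 / 4 : ℝ) * besselN a b c (1 / 2) √x =
      -(4 * (a - b) * x * cos √x +
        (4 * a * x - 3 * a + 2 * b - 4 * c) * √x * sin √x) / 4 := by
  set bracket := -a * x * sin √x + (b - a) * √x * cos √x + Qpoly a b c (-1 / 2) * sin √x
    with bracket_def
  calc (2 : ℝ) ^ (1 / 2 : ℝ) * Gamma (3 / 2) * x ^ (3 / 4 : ℝ) * besselN a b c (1 / 2) √x
      = (√2 * Gamma (3 / 2) * √(2 / π)) * (x ^ (3 / 4 : ℝ) * √x ^ (-1 / 2 : ℝ)) * bracket := by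
        rw [besselN_one_half a b c (sqrt_pos.2 hx), ← sqrt_eq_rpow, sq_sqrt hx.le]
        ring
    _ = √x * bracket := by
        rw [sqrt_two_mul_Gamma_three_halves_mul_sqrt, rpow_three_quarters_mul_sqrt_rpow hx, one_mul]
    _ = _ := by
        rw [bracket_def, Qpoly]
        linear_combination (b - a) * cos √x * sq_sqrt hx.le

lemma Qpoly_one_half (a b c : ℝ) : Qpoly a b c (1 / 2) = -(a - 2 * b - 4 * c) / 4 := by
  rw [Qpoly]
  ring

theorem stmt_4 (a b c : ℝ) (h : a - 2 * b - 4 * c ≠ 0) (x : ℝ) (hx : 0 < x) :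
    (2 : ℝ) ^ ((1 : ℝ) / 2) * Real.Gamma (3 / 2) * x ^ ((3 : ℝ) / 4) *
        besselN a b c (1/2) (Real.sqrt x) / Qpoly a b c (1/2) =
      (4 * (a - b) * x * Real.cos (Real.sqrt x) +
          (4 * a * x - 3 * a + 2 * b - 4 * c) * Real.sqrt x * Real.sin (Real.sqrt x)) /
        (a - 2 * b - 4 * c) := by
  rw [two_rpow_mul_Gamma_mul_besselN_one_half_sqrt a b c hx, Qpoly_one_half,
    div_div_div_cancel_right₀ four_ne_zero, neg_div_neg_eq]
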